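/- Let G be a finite group and S a generating subset of G with 1 ∈ S and S ≠ G. If S is not faithful, then G is non-abelian and S⁻¹ is faithful. -/

import Mathlib

open Pointwise

variable {G : Type*} [Group G] [DecidableEq G]

/-- `X` belongs to the family `F(S)`: `X` is nonempty and `XS` is a (finite)
proper subset of `G`. -/
def MemFam (S X : Finset G) : Prop :=
  X.Nonempty ∧ (↑(X * S) : Set G) ≠ Set.univ

/-- `X` is a fragment of `S`: a member of `F(S)` attaining the minimum of
`|XS| - |X|`. -/
def IsFragment (S X : Finset G) : Prop :=
  MemFam S X ∧ ∀ Y : Finset G, MemFam S Y →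
    (X * S).card - X.card ≤ (Y * S).card - Y.card

/-- `X` is an atom of `S`: a fragment of smallest cardinality. -/
def IsAtomOf (S X : Finset G) : Prop :=
  IsFragment S X ∧ ∀ Y : Finset G, IsFragment S Y → X.card ≤ Y.card

/-- `S` is faithful: every atom `A` of `S` satisfies `|A| ≤ |∇(A)|`. -/
def IsFaithful (S : Finset G) : Prop :=
  ∀ A : Finset G, IsAtomOf S A → A.card ≤ ((A * S) \ A).card

/-!
By submodularity of `X ↦ |XS|`, two fragments `X`, `Y` that meet intersect in a fragment as soon
as `|X| ≤ |G \ YS|`. An atom `A` with `|A| ≤ |G \ AS|` is therefore disjoint from each of its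
other left translates. If `as ∉ A` for some `a ∈ A` and `s ∈ S`, this forces `As` to be disjoint
from `A`, whence `|A| ≤ |∇(A)|`. For infinite `G` the size condition is automatic. For finite `G`,
the map `X ↦ G \ XS` sends fragments of `S` to fragments of `S⁻¹`, so the condition holds on
whichever side has the smaller atoms: one of `S`, `S⁻¹` is faithful. When `G` is abelian, inversion
identifies the two sides.
-/

open Finset MulAction MulOpposite

theorem card_union_mul_add_card_inter_mul_le {α : Type*} [Mul α] [DecidableEq α]
    (X Y S : Finset α) : #((X ∪ Y) * S) + #((X ∩ Y) * S) ≤ #(X * S) + #(Y * S) :=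
  calc #((X ∪ Y) * S) + #((X ∩ Y) * S)
      ≤ #(X * S ∪ Y * S) + #(X * S ∩ (Y * S)) := by
        rw [union_mul]; gcongr; exact inter_mul_subset
    _ = #(X * S) + #(Y * S) := card_union_add_card_inter _ _

theorem coe_eq_univ_of_mul_subset_self {S X : Finset G}
    (hgen : Subgroup.closure (S : Set G) = ⊤) (hX : X.Nonempty) (hXS : X * S ⊆ X) :
    (X : Set G) = Set.univ := by
  have closure_le : Subgroup.closure (S : Set G) ≤ (stabilizer Gᵐᵒᵖ X).unop :=
    (Subgroup.closure_le _).2 fun s hs ↦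
      eq_of_subset_of_card_le ((op_smul_finset_subset_mul hs).trans hXS) (card_smul_finset _ _).ge
  obtain ⟨a, ha⟩ := hX
  refine Set.eq_univ_of_forall fun x ↦ ?_
  have smul_eq : op (a⁻¹ * x) • X = X := closure_le (hgen ▸ Subgroup.mem_top (a⁻¹ * x))
  rw [← smul_eq, mem_coe]
  simpa using smul_mem_smul_finset (a := op (a⁻¹ * x)) ha

theorem card_le_card_mul_sdiff_of_isBlock {S A : Finset G} (hA : IsBlock G (A : Set G))
    (hAS : ¬ A * S ⊆ A) : #A ≤ #((A * S) \ A) := by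
  obtain ⟨_, has, has'⟩ := not_subset.1 hAS
  obtain ⟨a, ha, s, hs, rfl⟩ := mem_mul.1 has
  refine card_le_card_of_injOn (· * s) (fun x hx ↦ ?_) (mul_left_injective s).injOn
  refine mem_sdiff.2 ⟨mul_mem_mul hx hs, fun hxs ↦ has' ?_⟩
  have smul_eq : (a * x⁻¹) • (A : Set G) = A :=
    hA.smul_eq_of_mem hx (by simpa using ha)
  have := Set.smul_mem_smul_set (a := a * x⁻¹) (mem_coe.2 hxs)
  rw [smul_eq] at this
  simpa [mul_assoc] using this

variable {S X Y A B : Finset G}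

theorem MemFam.mono (hY : MemFam S Y) (hX : X.Nonempty) (hXY : X ⊆ Y) : MemFam S X :=
  ⟨hX, fun h ↦ hY.2 <| Set.univ_subset_iff.1 <| h ▸ coe_subset.2 (mul_subset_mul_right hXY)⟩

theorem MemFam.not_mul_subset_self (hS : S.Nonempty)
    (hgen : Subgroup.closure (S : Set G) = ⊤) (hX : MemFam S X) : ¬ X * S ⊆ X := by
  intro hXS
  have mul_eq : X * S = X := eq_of_subset_of_card_le hXS (card_le_card_mul_right hS)
  exact hX.2 (mul_eq.symm ▸ coe_eq_univ_of_mul_subset_self hgen hX.1 hXS)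

theorem memFam_smul {g : G} : MemFam S (g • X) ↔ MemFam S X := by
  simp [MemFam, smul_mul_assoc, -coe_mul]

theorem isFragment_smul {g : G} : IsFragment S (g • X) ↔ IsFragment S X := by
  simp only [IsFragment, memFam_smul, smul_mul_assoc, card_smul_finset]

theorem isAtomOf_smul {g : G} : IsAtomOf S (g • A) ↔ IsAtomOf S A := by
  simp only [IsAtomOf, isFragment_smul, card_smul_finset]

theorem IsFragment.coe_union_mul_ne_univ (hS : S.Nonempty) (hX : IsFragment S X)
    (hXY : (X ∩ Y).Nonempty) (hcard : (#X : ℕ∞) ≤ (↑(Y * S) : Set G)ᶜ.encard) :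
    (↑((X ∪ Y) * S) : Set G) ≠ Set.univ := by
  intro huniv
  have compl_subset : (↑(Y * S) : Set G)ᶜ ⊆ ↑((X * S) \ (Y * S)) := by
    rw [union_mul, coe_union] at huniv
    rw [coe_sdiff, Set.compl_eq_univ_sdiff, ← huniv, Set.union_sdiff_right]
  have card_le : #X ≤ #((X * S) \ (Y * S)) := by
    have := hcard.trans (Set.encard_le_encard compl_subset)
    rwa [Set.encard_coe_eq_coe_finsetCard, Nat.cast_le] at this
  have card_inter_le : #((X ∩ Y) * S) + #X ≤ #(X * S) := by
    have := card_le_card (inter_mul_subset (s₁ := X) (s₂ := Y) (t := S))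
    have := card_sdiff_add_card_inter (X * S) (Y * S)
    lia
  have excess_le := hX.2 _ (hX.1.mono hXY inter_subset_left)
  have card_le_mul : #(X ∩ Y) ≤ #((X ∩ Y) * S) := card_le_card_mul_right hS
  have card_pos := hXY.card_pos
  lia

theorem IsFragment.inter (hS : S.Nonempty) (hX : IsFragment S X) (hY : IsFragment S Y)
    (hXY : (X ∩ Y).Nonempty) (hcard : (#X : ℕ∞) ≤ (↑(Y * S) : Set G)ᶜ.encard) :
    IsFragment S (X ∩ Y) := by
  have union_mem : MemFam S (X ∪ Y) :=
    ⟨hX.1.1.mono subset_union_left, hX.coe_union_mul_ne_univ hS hXY hcard⟩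
  refine ⟨hX.1.mono hXY inter_subset_left, fun Z hZ ↦ le_trans ?_ (hX.2 Z hZ)⟩
  have le_union := hY.2 _ union_mem
  have submodular := card_union_mul_add_card_inter_mul_le X Y S
  have card_add := card_union_add_card_inter X Y
  have card_le_mul (Z : Finset G) : #Z ≤ #(Z * S) := card_le_card_mul_right hS
  have := card_le_mul X
  have := card_le_mul Y
  have := card_le_mul (X ∪ Y)
  lia

theorem IsAtomOf.eq_of_inter_nonempty (hS : S.Nonempty) (hA : IsAtomOf S A) (hB : IsAtomOf S B)
    (hAB : (A ∩ B).Nonempty) (hcard : (#A : ℕ∞) ≤ (↑(B * S) : Set G)ᶜ.encard) : A = B := by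
  have hinter : IsFragment S (A ∩ B) := hA.1.inter hS hB.1 hAB hcard
  calc A = A ∩ B := (eq_of_subset_of_card_le inter_subset_left (hA.2 _ hinter)).symm
    _ = B := eq_of_subset_of_card_le inter_subset_right (hB.2 _ hinter)

theorem IsAtomOf.isBlock (hS : S.Nonempty) (hA : IsAtomOf S A)
    (hcard : (#A : ℕ∞) ≤ (↑(A * S) : Set G)ᶜ.encard) : IsBlock G (A : Set G) := by
  refine isBlock_iff_smul_eq_of_nonempty.2 fun {g} hg ↦ ?_
  rw [← coe_smul_finset, ← coe_inter, coe_nonempty] at hg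
  rw [← coe_smul_finset, (isAtomOf_smul.2 hA).eq_of_inter_nonempty hS hA hg]
  rwa [card_smul_finset]

theorem IsAtomOf.card_le_card_mul_sdiff (hS : S.Nonempty)
    (hgen : Subgroup.closure (S : Set G) = ⊤) (hA : IsAtomOf S A)
    (hcard : (#A : ℕ∞) ≤ (↑(A * S) : Set G)ᶜ.encard) : #A ≤ #((A * S) \ A) :=
  card_le_card_mul_sdiff_of_isBlock (hA.isBlock hS hcard) (hA.1.1.not_mul_subset_self hS hgen)

theorem isFaithful_of_infinite [Infinite G] (hS : S.Nonempty)
    (hgen : Subgroup.closure (S : Set G) = ⊤) : IsFaithful S := fun A hA ↦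
  hA.card_le_card_mul_sdiff hS hgen <| by
    simp only [(A * S).finite_toSet.infinite_compl.encard_eq, le_top]

section Duality

variable [Fintype G]

theorem compl_mul_mul_inv_subset (X S : Finset G) : (X * S)ᶜ * S⁻¹ ⊆ Xᶜ := by
  refine mul_subset_iff.2 fun y hy t ht ↦ mem_compl.2 fun hyt ↦ mem_compl.1 hy ?_
  simpa using mul_mem_mul hyt (mem_inv'.1 ht)

theorem MemFam.compl_mul (hX : MemFam S X) : MemFam S⁻¹ (X * S)ᶜ := by
  obtain ⟨⟨x, hx⟩, hXS⟩ := hX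
  refine ⟨?_, fun huniv ↦ ?_⟩
  · rwa [nonempty_iff_ne_empty, Ne, compl_eq_empty_iff, ← coe_eq_univ]
  · have hmem : x ∈ (X * S)ᶜ * S⁻¹ := by rw [coe_eq_univ.1 huniv]; exact mem_univ x
    exact mem_compl.1 (compl_mul_mul_inv_subset X S hmem) hx

theorem card_compl_mul_mul_inv_sub_le (X S : Finset G) :
    #((X * S)ᶜ * S⁻¹) - #(X * S)ᶜ ≤ #(X * S) - #X := by
  have := card_le_card (compl_mul_mul_inv_subset X S)
  have := card_add_card_compl X
  have := card_add_card_compl (X * S)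
  lia

theorem IsFragment.compl_mul (hX : IsFragment S X) : IsFragment S⁻¹ (X * S)ᶜ := by
  refine ⟨hX.1.compl_mul, fun Y hY ↦ ?_⟩
  calc #((X * S)ᶜ * S⁻¹) - #(X * S)ᶜ
      ≤ #(X * S) - #X := card_compl_mul_mul_inv_sub_le X S
    _ ≤ #((Y * S⁻¹)ᶜ * S) - #(Y * S⁻¹)ᶜ := hX.2 _ (by simpa only [inv_inv] using hY.compl_mul)
    _ ≤ #(Y * S⁻¹) - #Y := by simpa only [inv_inv] using card_compl_mul_mul_inv_sub_le Y S⁻¹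

end Duality

theorem IsAtomOf.card_le_encard_compl_mul [Finite G] (hA : IsAtomOf S A)
    (hB : IsAtomOf S⁻¹ B) (hAB : #A ≤ #B) : (#A : ℕ∞) ≤ (↑(A * S) : Set G)ᶜ.encard := by
  have := Fintype.ofFinite G
  rw [← coe_compl, Set.encard_coe_eq_coe_finsetCard, Nat.cast_le]
  exact hAB.trans (hB.2 _ hA.1.compl_mul)

theorem isFaithful_or_isFaithful_inv [Finite G] (hS : S.Nonempty)
    (hgen : Subgroup.closure (S : Set G) = ⊤) : IsFaithful S ∨ IsFaithful S⁻¹ := by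
  have hgen' : Subgroup.closure (↑S⁻¹ : Set G) = ⊤ := by
    rw [coe_inv, Subgroup.closure_inv, hgen]
  refine or_iff_not_imp_left.2 fun hnf B hB ↦ ?_
  simp only [IsFaithful, not_forall] at hnf
  obtain ⟨A, hA, hA'⟩ := hnf
  have card_lt : #B < #A := by
    contrapose! hA'
    exact hA.card_le_card_mul_sdiff hS hgen (hA.card_le_encard_compl_mul hB hA')
  exact hB.card_le_card_mul_sdiff hS.inv hgen'
    (hB.card_le_encard_compl_mul (by rwa [inv_inv]) card_lt.le)

section Commutative

variable {G : Type*} [CommGroup G] [DecidableEq G] {S X A : Finset G}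

theorem memFam_inv_inv : MemFam S⁻¹ X⁻¹ ↔ MemFam S X := by
  simp only [MemFam, ← mul_inv, coe_inv, inv_nonempty_iff, Ne, inv_eq_iff_eq_inv, Set.inv_univ]

theorem isFragment_inv_inv : IsFragment S⁻¹ X⁻¹ ↔ IsFragment S X := by
  rw [IsFragment, IsFragment, inv_surjective.forall]
  simp only [memFam_inv_inv, ← mul_inv, card_inv]

theorem isAtomOf_inv_inv : IsAtomOf S⁻¹ A⁻¹ ↔ IsAtomOf S A := by
  rw [IsAtomOf, IsAtomOf, inv_surjective.forall]
  simp only [isFragment_inv_inv, card_inv]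

theorem isFaithful_inv : IsFaithful S⁻¹ ↔ IsFaithful S := by
  have inv_sdiff_inv (X Y : Finset G) : X⁻¹ \ Y⁻¹ = (X \ Y)⁻¹ := by
    ext; simp only [mem_sdiff, mem_inv']
  rw [IsFaithful, IsFaithful, inv_surjective.forall]
  simp only [isAtomOf_inv_inv, ← mul_inv, inv_sdiff_inv, card_inv]

end Commutative

theorem stmt_5_general (hS : S.Nonempty) (hgen : Subgroup.closure (S : Set G) = ⊤)
    (hnf : ¬ IsFaithful S) : Finite G ∧ (∃ a b : G, a * b ≠ b * a) ∧ IsFaithful S⁻¹ := by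
  have hfin : Finite G := not_infinite_iff_finite.1 fun _ ↦ hnf (isFaithful_of_infinite hS hgen)
  have hinv : IsFaithful S⁻¹ := (isFaithful_or_isFaithful_inv hS hgen).resolve_left hnf
  refine ⟨hfin, ?_, hinv⟩
  by_contra! hcomm
  let _ : CommGroup G := { ‹Group G› with mul_comm := hcomm }
  exact hnf (isFaithful_inv.1 hinv)

/-- Let `G` be a finite group and `S` a generating subset of `G` with `1 ∈ S` and
`S ≠ G`. If `S` is not faithful, then `G` is non-abelian and `S⁻¹` is faithful. -/
theorem stmt_5 {G : Type*} [Group G] [Fintype G] [DecidableEq G] (S : Finset G)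
    (h1 : (1 : G) ∈ S) (hgen : Subgroup.closure (S : Set G) = ⊤)
    (hS : S ≠ Finset.univ) (hnf : ¬ IsFaithful S) :
    (∃ a b : G, a * b ≠ b * a) ∧ IsFaithful S⁻¹ :=
  (stmt_5_general ⟨1, h1⟩ hgen hnf).2
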